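/- Let d ≥ 1, let H_B and H_R be finite-dimensional complex Hilbert spaces, and let ψ ∈ ℂ^d ⊗ H_B ⊗ H_R be a unit vector. If there exists a POVM (Λ_z)_{z=0}^{d−1} on H_B with perfect guessing probability, ∑_z ⟨ψ| (|z⟩⟨z| ⊗ Λ_z ⊗ 1_R) |ψ⟩ = 1, then the X-measured classical-quantum marginal is exactly the ideal key state: ψ̄_X^{AR} = (1/d) 1_A ⊗ ψ^R. In particular, each X-measurement outcome probability ‖(⟨x̃| ⊗ 1_{BR}) ψ‖² equals 1/d. -/

import Mathlib

open Matrix BigOperators Finset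
open scoped Classical ComplexOrder

noncomputable section

/-- The positive semidefinite square root of a matrix (zero if the matrix is not PSD). -/
def psdSqrt {ι : Type*} [Fintype ι] [DecidableEq ι] (M : Matrix ι ι ℂ) : Matrix ι ι ℂ :=
  if h : M.PosSemidef then
    (h.1.eigenvectorUnitary : Matrix ι ι ℂ) *
      Matrix.diagonal (fun i => ((Real.sqrt (h.1.eigenvalues i) : ℝ) : ℂ)) *
      (star h.1.eigenvectorUnitary : Matrix ι ι ℂ)
  else 0

/-- Trace norm ‖M‖₁ = Tr √(M†M). -/
def traceNorm {ι : Type*} [Fintype ι] [DecidableEq ι] (M : Matrix ι ι ℂ) : ℝ :=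
  ((psdSqrt (Mᴴ * M)).trace).re

/-- Trace distance D(ρ,σ) = ‖ρ−σ‖₁/2. -/
def traceDist {ι : Type*} [Fintype ι] [DecidableEq ι] (ρ σ : Matrix ι ι ℂ) : ℝ :=
  traceNorm (ρ - σ) / 2

/-- Fidelity F(ρ,σ) = ‖√ρ√σ‖₁. -/
def fidelity {ι : Type*} [Fintype ι] [DecidableEq ι] (ρ σ : Matrix ι ι ℂ) : ℝ :=
  traceNorm (psdSqrt ρ * psdSqrt σ)

/-- ω = exp(2πi/d). -/
def omega (d : ℕ) : ℂ := Complex.exp (2 * Real.pi * Complex.I / d)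

/-- Conjugate (X) basis vector |x̃⟩ of ℂ^d, component at z: ω^{−xz}/√d. -/
def xVec (d : ℕ) (x z : Fin d) : ℂ :=
  (starRingEnd ℂ) (omega d ^ (x.val * z.val)) / (Real.sqrt d : ℂ)

/-- Component of (⟨x̃|⊗1_{BR})|ψ⟩. -/
def condVecX {d : ℕ} {β r : Type*} [Fintype β] [Fintype r]
    (ψ : Fin d × β × r → ℂ) (x : Fin d) (p : β × r) : ℂ :=
  ∑ z, (starRingEnd ℂ) (xVec d x z) * ψ (z, p.1, p.2)

/-- Unnormalized conditional state ϑ_x^R = Tr_B[(⟨x̃|⊗1)|ψ⟩⟨ψ|(|x̃⟩⊗1)]. -/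
def thetaR {d : ℕ} {β r : Type*} [Fintype β] [Fintype r]
    (ψ : Fin d × β × r → ℂ) (x : Fin d) : Matrix r r ℂ :=
  Matrix.of fun s s' => ∑ b, condVecX ψ x (b, s) * (starRingEnd ℂ) (condVecX ψ x (b, s'))

/-- X-measured cq marginal ψ̄_X^{AR} = ∑_x |x̃⟩⟨x̃| ⊗ ϑ_x^R. -/
def cqMarginalX {d : ℕ} {β r : Type*} [Fintype β] [Fintype r]
    (ψ : Fin d × β × r → ℂ) : Matrix (Fin d × r) (Fin d × r) ℂ :=
  Matrix.of fun p q =>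
    ∑ x, xVec d x p.1 * (starRingEnd ℂ) (xVec d x q.1) * thetaR ψ x p.2 q.2

/-- Reduced state ψ^R = Tr_{AB}|ψ⟩⟨ψ|. -/
def reducedR {α β r : Type*} [Fintype α] [Fintype β] [Fintype r]
    (ψ : α × β × r → ℂ) : Matrix r r ℂ :=
  Matrix.of fun s s' => ∑ z, ∑ b, ψ (z, b, s) * (starRingEnd ℂ) (ψ (z, b, s'))

/-- The ideal key state (1/d) 1_A ⊗ ψ^R. -/
def idealKey {d : ℕ} {β r : Type*} [Fintype β] [Fintype r]
    (ψ : Fin d × β × r → ℂ) : Matrix (Fin d × r) (Fin d × r) ℂ :=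
  Matrix.of fun p q => (if p.1 = q.1 then ((d : ℂ))⁻¹ else 0) * reducedR ψ p.2 q.2

/-- Security parameter p_secure(X^A|R) = D(ψ̄_X^{AR}, (1/d)1⊗ψ^R). -/
def pSecure {d : ℕ} {β r : Type*} [Fintype β] [DecidableEq β] [Fintype r] [DecidableEq r]
    (ψ : Fin d × β × r → ℂ) : ℝ :=
  traceDist (cqMarginalX ψ) (idealKey ψ)

/-- Guessing probability ∑_z ⟨ψ|(|z⟩⟨z| ⊗ Λ_z ⊗ 1_R)|ψ⟩. -/
def pGuess {d : ℕ} {β r : Type*} [Fintype β] [Fintype r]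
    (ψ : Fin d × β × r → ℂ) (Λ : Fin d → Matrix β β ℂ) : ℝ :=
  (∑ z, ∑ b, ∑ b', ∑ s, (starRingEnd ℂ) (ψ (z, b, s)) * Λ z b b' * ψ (z, b', s)).re

end

/-- If a POVM identifies every member of a family of vectors perfectly, each of its effects
annihilates the vectors carrying a different label. -/
theorem povm_mulVec_eq_zero_of_perfect_guess {d : ℕ} {β r : Type*} [Fintype β] [DecidableEq β]
    [Fintype r] (ψ : Fin d × β × r → ℂ) (hψ : ∑ t, ‖ψ t‖ ^ 2 = 1)
    (Λ : Fin d → Matrix β β ℂ)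
    (hΛpos : ∀ z, (Λ z).PosSemidef) (hΛsum : ∑ z, Λ z = 1)
    (hguess : pGuess ψ Λ = 1) {z w : Fin d} (hzw : w ≠ z) (s : r) :
    Λ w *ᵥ (fun b => ψ (z, b, s)) = 0 := by
  set v : Fin d → r → β → ℂ := fun z s b => ψ (z, b, s) with hv
  set q : Fin d → Fin d → r → ℝ := fun w z s => (star (v z s) ⬝ᵥ (Λ w *ᵥ v z s)).re with hq
  have hq_nonneg : ∀ w z s, 0 ≤ q w z s := fun w z s =>
    (Complex.le_def.1 ((hΛpos w).dotProduct_mulVec_nonneg (v z s))).1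
  have hdiag : ∑ z, ∑ s, q z z s = 1 := by
    rw [← hguess, pGuess, Complex.re_sum]
    refine Finset.sum_congr rfl fun z _ => ?_
    simp only [hq, hv, dotProduct, mulVec, ← Complex.re_sum, Pi.star_apply, Finset.mul_sum]
    congr 1
    rw [Finset.sum_comm]
    refine Finset.sum_congr rfl fun b _ => ?_
    rw [Finset.sum_comm]
    simp [mul_assoc]
  have htotal : ∑ z, ∑ s, ∑ w, q w z s = 1 := by
    rw [← hψ, Fintype.sum_prod_type]
    refine Finset.sum_congr rfl fun z _ => ?_
    rw [Fintype.sum_prod_type_right]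
    refine Finset.sum_congr rfl fun s _ => ?_
    simp only [hq]
    rw [← Complex.re_sum, ← dotProduct_sum, ← sum_mulVec, hΛsum, one_mulVec]
    simp only [dotProduct, Complex.re_sum, hv, Pi.star_apply]
    refine Finset.sum_congr rfl fun b _ => ?_
    rw [← Complex.normSq_eq_norm_sq, Complex.normSq_apply]
    simp
  have hle : ∀ z s, q z z s ≤ ∑ w, q w z s := fun z s =>
    Finset.single_le_sum (f := fun w => q w z s) (fun w _ => hq_nonneg w z s) (Finset.mem_univ z)
  have hrow : ∀ z, ∑ s, q z z s = ∑ s, ∑ w, q w z s := fun z =>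
    (Finset.sum_eq_sum_iff_of_le fun z _ => Finset.sum_le_sum fun s _ => hle z s).1
      (hdiag.trans htotal.symm) z (Finset.mem_univ z)
  have hcell : q z z s = ∑ w, q w z s :=
    (Finset.sum_eq_sum_iff_of_le fun s _ => hle z s).1 (hrow z) s (Finset.mem_univ s)
  have hoff : q w z s = 0 := by
    rw [← Finset.add_sum_erase _ _ (Finset.mem_univ z)] at hcell
    exact (Finset.sum_eq_zero_iff_of_nonneg fun w _ => hq_nonneg w z s).1
      (by linarith) w (Finset.mem_erase.2 ⟨hzw, Finset.mem_univ w⟩)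
  refine ((hΛpos w).dotProduct_mulVec_zero_iff (v z s)).1 (Complex.ext hoff ?_)
  exact (Complex.le_def.1 ((hΛpos w).dotProduct_mulVec_nonneg (v z s))).2.symm

/-- Under perfect guessing, the `B`-components belonging to different `Z`-outcomes are
orthogonal. -/
theorem sum_mul_conj_eq_zero_of_perfect_guess {d : ℕ} {β r : Type*} [Fintype β] [DecidableEq β]
    [Fintype r] (ψ : Fin d × β × r → ℂ) (hψ : ∑ t, ‖ψ t‖ ^ 2 = 1)
    (Λ : Fin d → Matrix β β ℂ)
    (hΛpos : ∀ z, (Λ z).PosSemidef) (hΛsum : ∑ z, Λ z = 1)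
    (hguess : pGuess ψ Λ = 1) {z w : Fin d} (hzw : z ≠ w) (s s' : r) :
    ∑ b, ψ (z, b, s) * (starRingEnd ℂ) (ψ (w, b, s')) = 0 := by
  have hzero {z w : Fin d} (h : w ≠ z) (s : r) : Λ w *ᵥ (fun b => ψ (z, b, s)) = 0 :=
    povm_mulVec_eq_zero_of_perfect_guess ψ hψ Λ hΛpos hΛsum hguess h s
  have hfix : Λ z *ᵥ (fun b => ψ (z, b, s)) = fun b => ψ (z, b, s) := by
    have h := Finset.sum_eq_single_of_mem (f := fun w => Λ w *ᵥ (fun b => ψ (z, b, s))) z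
      (Finset.mem_univ z) fun w _ h => hzero h s
    rw [← h, ← sum_mulVec, hΛsum, one_mulVec]
  change (fun b => ψ (z, b, s)) ⬝ᵥ star (fun b => ψ (w, b, s')) = 0
  rw [dotProduct_comm, ← hfix, dotProduct_mulVec, ← (hΛpos z).1.eq, ← star_mulVec,
    hzero hzw s', star_zero, zero_dotProduct]

theorem conj_xVec_mul_xVec_self {d : ℕ} (x z : Fin d) :
    (starRingEnd ℂ) (xVec d x z) * xVec d x z = (d : ℂ)⁻¹ := by
  have hd : d ≠ 0 := (Fin.pos x).ne'
  have hω : ‖omega d‖ = 1 := (Complex.isPrimitiveRoot_exp d hd).norm'_eq_one hd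
  rw [mul_comm, Complex.mul_conj, Complex.normSq_eq_norm_sq]
  simp [xVec, hω]

theorem sum_xVec_mul_conj_xVec {d : ℕ} (p q : Fin d) :
    ∑ x, xVec d x p * (starRingEnd ℂ) (xVec d x q) = if p = q then 1 else 0 := by
  have hd : d ≠ 0 := (Fin.pos p).ne'
  have hprim : IsPrimitiveRoot (omega d) d := Complex.isPrimitiveRoot_exp d hd
  have hω : ‖omega d‖ = 1 := hprim.norm'_eq_one hd
  split_ifs with hpq
  · subst hpq
    simp_rw [mul_comm (xVec d _ _), conj_xVec_mul_xVec_self]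
    simp [hd]
  · set ζ : ℂ := (starRingEnd ℂ) (omega d) ^ p.val * omega d ^ q.val with hζ
    have hunit : (starRingEnd ℂ) (omega d) * omega d = 1 := by
      rw [mul_comm, Complex.mul_conj, Complex.normSq_eq_norm_sq, hω]
      simp
    have hζ_pow : ζ ^ d = 1 := by
      rw [hζ, mul_pow, ← pow_mul, ← pow_mul, mul_comm p.val, mul_comm q.val, pow_mul, pow_mul,
        ← map_pow, hprim.pow_eq_one]
      simp
    have hζ_ne : ζ ≠ 1 := fun h => hpq <| Fin.ext <| hprim.pow_inj p.2 q.2 <| by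
      have hp : omega d ^ p.val * (starRingEnd ℂ) (omega d) ^ p.val = 1 := by
        rw [← mul_pow, mul_comm, hunit, one_pow]
      calc omega d ^ p.val = omega d ^ p.val * ζ := by rw [h, mul_one]
        _ = omega d ^ q.val := by rw [hζ, ← mul_assoc, hp, one_mul]
    have hsum : ∑ x : Fin d, ζ ^ x.val = 0 := by
      rw [Fin.sum_univ_eq_sum_range (fun n => ζ ^ n) d]
      have h := mul_geom_sum ζ d
      rw [hζ_pow, sub_self] at h
      exact (mul_eq_zero.1 h).resolve_left (sub_ne_zero.2 hζ_ne)
    have hterm (x : Fin d) : xVec d x p * (starRingEnd ℂ) (xVec d x q) =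
        ζ ^ x.val * ((Real.sqrt d : ℂ)⁻¹ * (Real.sqrt d : ℂ)⁻¹) := by
      simp only [xVec, hζ, map_div₀, Complex.conj_conj, Complex.conj_ofReal, map_pow, mul_pow,
        ← pow_mul]
      rw [mul_comm p.val, mul_comm q.val]
      ring
    simp_rw [hterm]
    rw [← Finset.sum_mul, hsum, zero_mul]

/-- Orthogonality of the `B`-components makes every `X`-conditional state on `R` equal to
`ψ^R / d`. -/
theorem thetaR_eq_of_orthogonal {d : ℕ} {β r : Type*} [Fintype β] [Fintype r]
    (ψ : Fin d × β × r → ℂ)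
    (horth : ∀ z w : Fin d, z ≠ w → ∀ s s' : r,
      ∑ b, ψ (z, b, s) * (starRingEnd ℂ) (ψ (w, b, s')) = 0) (x : Fin d) (s s' : r) :
    thetaR ψ x s s' = (d : ℂ)⁻¹ * reducedR ψ s s' := by
  have hexpand : thetaR ψ x s s' = ∑ z, ∑ w, (starRingEnd ℂ) (xVec d x z) * xVec d x w *
      ∑ b, ψ (z, b, s) * (starRingEnd ℂ) (ψ (w, b, s')) := by
    simp only [thetaR, condVecX, Matrix.of_apply, map_sum, map_mul, Complex.conj_conj,
      Finset.sum_mul_sum]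
    simp only [Finset.mul_sum]
    rw [Finset.sum_comm]
    refine Finset.sum_congr rfl fun z _ => ?_
    rw [Finset.sum_comm]
    refine Finset.sum_congr rfl fun w _ => Finset.sum_congr rfl fun b _ => ?_
    ring
  rw [hexpand, reducedR, Matrix.of_apply, Finset.mul_sum]
  refine Finset.sum_congr rfl fun z _ => ?_
  rw [Finset.sum_eq_single z (fun w _ h => by rw [horth z w h.symm, mul_zero]) (by simp),
    conj_xVec_mul_xVec_self]

theorem sum_thetaR_diag {d : ℕ} {β r : Type*} [Fintype β] [Fintype r]
    (ψ : Fin d × β × r → ℂ) (x : Fin d) :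
    ∑ s, thetaR ψ x s s = ((∑ t : β × r, ‖condVecX ψ x t‖ ^ 2 : ℝ) : ℂ) := by
  simp [thetaR, Fintype.sum_prod_type_right, Complex.mul_conj, Complex.normSq_eq_norm_sq]

theorem sum_reducedR_diag {α β r : Type*} [Fintype α] [Fintype β] [Fintype r]
    (ψ : α × β × r → ℂ) : ∑ s, reducedR ψ s s = ((∑ t, ‖ψ t‖ ^ 2 : ℝ) : ℂ) := by
  simp only [reducedR, Matrix.of_apply, Fintype.sum_prod_type, Complex.mul_conj,
    Complex.normSq_eq_norm_sq, Complex.ofReal_sum]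
  rw [Finset.sum_comm]
  exact Finset.sum_congr rfl fun z _ => Finset.sum_comm

/-- Perfect recoverability of Z^A from B implies that the X-measured cq marginal
is exactly the ideal key state, and each X-outcome has probability 1/d. -/
theorem perfect_recovery_implies_perfect_key {d : ℕ} (hd : 1 ≤ d)
    {β r : Type*} [Fintype β] [DecidableEq β] [Fintype r] [DecidableEq r]
    (ψ : Fin d × β × r → ℂ) (hψ : ∑ t, ‖ψ t‖ ^ 2 = 1)
    (Λ : Fin d → Matrix β β ℂ)
    (hΛpos : ∀ z, (Λ z).PosSemidef) (hΛsum : ∑ z, Λ z = 1)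
    (hguess : pGuess ψ Λ = 1) :
    cqMarginalX ψ = idealKey ψ ∧
      ∀ x : Fin d, ∑ t : β × r, ‖condVecX ψ x t‖ ^ 2 = 1 / d := by
  have htheta := thetaR_eq_of_orthogonal ψ fun z w hzw =>
    sum_mul_conj_eq_zero_of_perfect_guess ψ hψ Λ hΛpos hΛsum hguess hzw
  refine ⟨?_, fun x => ?_⟩
  · ext p q
    simp only [cqMarginalX, idealKey, Matrix.of_apply, htheta]
    rw [← Finset.sum_mul, sum_xVec_mul_conj_xVec]
    split_ifs <;> simp
  · have h := sum_thetaR_diag ψ x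
    simp_rw [htheta] at h
    rw [← Finset.mul_sum, sum_reducedR_diag, hψ] at h
    rw [Complex.ofReal_one, mul_one] at h
    rw [one_div]
    refine Complex.ofReal_injective (h.symm.trans ?_)
    rw [Complex.ofReal_inv, Complex.ofReal_natCast]
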